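/- A topological space X is both functional Alexandroff and uniformizable if and only if the collection {V(a) : a ∈ X} is a partition of X into finite open subsets (each V(a) is open and finite, and any two sets V(x), V(y) are either disjoint or equal). -/

import Mathlib

open Set

variable {X : Type*}

/-- `V a` : the intersection of all open neighbourhoods of `a`. -/
def V [TopologicalSpace X] (a : X) : Set X :=
  ⋂₀ {U : Set X | IsOpen U ∧ a ∈ U}

/-- A topological space is uniformizable if its topology is induced by some
uniform structure. -/
def Uniformizable (X : Type*) [t : TopologicalSpace X] : Prop :=
  ∃ u : UniformSpace X, u.toTopologicalSpace = t

/-- `Vf f a = ⋃ₙ f⁻ⁿ(a)` : the union of the preimages of `{a}` under all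
iterates of `f` (including the 0-th iterate). -/
def Vf (f : X → X) (a : X) : Set X :=
  ⋃ n : ℕ, (f^[n]) ⁻¹' {a}

/-- The functional Alexandroff topology on `X` corresponding to `f`, generated
by the basis `{Vf f a : a ∈ X}`. -/
def funcAlexTop (f : X → X) : TopologicalSpace X :=
  TopologicalSpace.generateFrom {S : Set X | ∃ a : X, S = Vf f a}

/-- A topological space is functional Alexandroff if its topology is the
functional Alexandroff topology corresponding to some self-map. -/
def IsFunctionalAlexandroff (X : Type*) [t : TopologicalSpace X] : Prop :=
  ∃ f : X → X, t = funcAlexTop f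

theorem mem_V_iff [TopologicalSpace X] {a b : X} : b ∈ V a ↔ b ⤳ a := by
  simp only [V, mem_sInter, mem_ofPred_eq, and_imp, specializes_iff_forall_open]

theorem mem_V_self [TopologicalSpace X] (a : X) : a ∈ V a :=
  mem_V_iff.2 specializes_rfl

theorem V_subset [TopologicalSpace X] {a : X} {U : Set X} (hU : IsOpen U) (ha : a ∈ U) :
    V a ⊆ U :=
  sInter_subset_of_mem ⟨hU, ha⟩

theorem mem_Vf_iff {f : X → X} {a b : X} : b ∈ Vf f a ↔ ∃ n : ℕ, f^[n] b = a := by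
  simp [Vf]

theorem Vf_subset_of_isOpen {f : X → X} {U : Set X} (hU : @IsOpen X (funcAlexTop f) U) :
    ∀ a ∈ U, Vf f a ⊆ U := by
  induction hU with
  | basic s hs =>
    obtain ⟨c, rfl⟩ := hs
    intro a ha b hb
    obtain ⟨m, hm⟩ := mem_Vf_iff.1 ha
    obtain ⟨n, hn⟩ := mem_Vf_iff.1 hb
    exact mem_Vf_iff.2 ⟨m + n, by rw [Function.iterate_add_apply, hn, hm]⟩
  | univ => exact fun a _ => subset_univ _
  | inter s t _ _ hs ht => exact fun a ha => subset_inter (hs a ha.1) (ht a ha.2)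
  | sUnion S _ h =>
    rintro a ⟨s, hs, ha⟩
    exact (h s hs a ha).trans (subset_sUnion_of_mem hs)

theorem isOpen_Vf (f : X → X) (a : X) : @IsOpen X (funcAlexTop f) (Vf f a) :=
  TopologicalSpace.isOpen_generateFrom_of_mem ⟨a, rfl⟩

theorem V_eq_Vf [t : TopologicalSpace X] {f : X → X} (h : t = funcAlexTop f) (a : X) :
    V a = Vf f a := by
  subst h
  refine Subset.antisymm ?_ (subset_sInter fun U hU => Vf_subset_of_isOpen hU.1 a hU.2)
  exact sInter_subset_of_mem ⟨isOpen_Vf f a, mem_Vf_iff.2 ⟨0, rfl⟩⟩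

theorem Vf_finite_of_symm {f : X → X} (h : ∀ a b, b ∈ Vf f a → a ∈ Vf f b) (a : X) :
    (Vf f a).Finite := by
  obtain ⟨n, hn⟩ := mem_Vf_iff.1 (h (f a) a (mem_Vf_iff.2 ⟨1, rfl⟩))
  have hp : Function.IsPeriodicPt f (n + 1) a := hn
  refine ((finite_Iio (n + 1)).image fun k => f^[k] a).subset fun b hb => ?_
  obtain ⟨k, hk⟩ := mem_Vf_iff.1 (h a b hb)
  exact ⟨k % (n + 1), Nat.mod_lt _ n.succ_pos, (hp.iterate_mod_apply k).trans hk⟩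

theorem Uniformizable.mem_V_comm [t : TopologicalSpace X] (h : Uniformizable X) {a b : X} :
    b ∈ V a ↔ a ∈ V b := by
  obtain ⟨u, rfl⟩ := h
  simp only [mem_V_iff, specializes_comm]

theorem V_eq_of_mem [TopologicalSpace X]
    (h : ∀ x y : X, V x = V y ∨ Disjoint (V x) (V y)) {x y : X} (hy : y ∈ V x) :
    V y = V x :=
  (h y x).resolve_right fun hd => disjoint_left.1 hd (mem_V_self y) hy

/-- A space partitioned by the open sets `V a` has the topology induced by `V` from the
discrete topology on sets, hence is uniformizable. -/
theorem uniformizable_of_partition [t : TopologicalSpace X] (ho : ∀ a : X, IsOpen (V a))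
    (h : ∀ x y : X, V x = V y ∨ Disjoint (V x) (V y)) : Uniformizable X := by
  refine ⟨UniformSpace.comap (V : X → Set X) ⊥, ?_⟩
  refine TopologicalSpace.ext_iff.2 fun U => ⟨?_, fun hU => ?_⟩
  · rintro ⟨S, -, rfl⟩
    refine isOpen_iff_forall_mem_open.2 fun x hx => ⟨V x, fun y hy => ?_, ho x, mem_V_self x⟩
    rw [mem_preimage, V_eq_of_mem h hy]
    exact hx
  · refine ⟨V '' U, trivial, Subset.antisymm ?_ (subset_preimage_image V U)⟩
    rintro x ⟨y, hy, hxy⟩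
    exact V_subset hU hy (hxy ▸ mem_V_self x)

/-- If the sets `V a` form a partition into finite sets, some self-map permutes each of them
cyclically. -/
theorem exists_Vf_eq_V [TopologicalSpace X] (hf : ∀ a : X, (V a).Finite)
    (h : ∀ x y : X, V x = V y ∨ Disjoint (V x) (V y)) :
    ∃ f : X → X, ∀ a, Vf f a = V a := by
  have hcycle : ∀ s : Set X, ∃ g : Equiv.Perm X, s.Finite → g.IsCycleOn s := fun s => by
    by_cases hs : s.Finite
    · obtain ⟨g, hg, -⟩ := hs.countable.exists_cycleOn
      exact ⟨g, fun _ => hg⟩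
    · exact ⟨1, fun hs' => absurd hs' hs⟩
  choose g hg using hcycle
  have hmem : ∀ (n : ℕ) (x : X), (g (V x) ^ n) x ∈ V x := fun n x =>
    ((hg _ (hf x)).1.perm_pow n).mapsTo (mem_V_self x)
  have hiter : ∀ (n : ℕ) (x : X), (fun y => g (V y) y)^[n] x = (g (V x) ^ n) x := by
    intro n x
    induction n with
    | zero => rfl
    | succ n ih =>
      rw [Function.iterate_succ_apply', ih, V_eq_of_mem h (hmem n x), pow_succ',
        Equiv.Perm.mul_apply]
  refine ⟨fun y => g (V y) y, fun a => ?_⟩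
  ext b
  simp only [mem_Vf_iff, hiter]
  constructor
  · rintro ⟨n, rfl⟩
    rw [V_eq_of_mem h (hmem n b)]
    exact mem_V_self b
  · intro hb
    have hVb := V_eq_of_mem h hb
    have hc : (g (V b)).IsCycleOn ((hf b).toFinset : Set X) := by
      simpa using hg _ (hf b)
    obtain ⟨n, -, hn⟩ := hc.exists_pow_eq (a := b) (b := a)
      ((hf b).mem_toFinset.2 (mem_V_self b))
      ((hf b).mem_toFinset.2 (hVb ▸ mem_V_self a))
    exact ⟨n, hn⟩

theorem isFunctionalAlexandroff_of_Vf_eq_V [t : TopologicalSpace X] (ho : ∀ a : X, IsOpen (V a))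
    {f : X → X} (hf : ∀ a, Vf f a = V a) : IsFunctionalAlexandroff X := by
  refine ⟨f, le_antisymm (le_generateFrom ?_) fun U hU => ?_⟩
  · rintro _ ⟨a, rfl⟩
    exact hf a ▸ ho a
  · refine (@isOpen_iff_forall_mem_open _ (funcAlexTop f) U).2 fun x hx =>
      ⟨Vf f x, ?_, isOpen_Vf f x, ?_⟩
    · exact hf x ▸ V_subset hU hx
    · exact hf x ▸ mem_V_self x

/-- `X` is both functional Alexandroff and uniformizable iff `{V a : a ∈ X}` is
a partition of `X` into finite open subsets (each `V a` is open and finite, and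
any two such sets are either equal or disjoint). -/
theorem stmt11 [TopologicalSpace X] :
    (IsFunctionalAlexandroff X ∧ Uniformizable X) ↔
      ((∀ a : X, IsOpen (V a) ∧ (V a).Finite) ∧
        ∀ x y : X, V x = V y ∨ Disjoint (V x) (V y)) := by
  constructor
  · rintro ⟨⟨f, hf⟩, hu⟩
    refine ⟨fun a => ⟨?_, ?_⟩, fun x y => ?_⟩
    · rw [V_eq_Vf hf, hf]
      exact isOpen_Vf f a
    · rw [V_eq_Vf hf]
      refine Vf_finite_of_symm (fun a b hb => ?_) a
      rw [← V_eq_Vf hf] at hb ⊢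
      exact hu.mem_V_comm.1 hb
    · have hsub : ∀ {x y : X}, y ∈ V x → V y ⊆ V x := fun hy z hz =>
        mem_V_iff.2 ((mem_V_iff.1 hz).trans (mem_V_iff.1 hy))
      have heq : ∀ {x y : X}, y ∈ V x → V y = V x := fun hy =>
        (hsub hy).antisymm (hsub (hu.mem_V_comm.1 hy))
      refine or_iff_not_imp_right.2 fun hd => ?_
      obtain ⟨z, hzx, hzy⟩ := not_disjoint_iff.1 hd
      exact (heq hzx).symm.trans (heq hzy)
  · rintro ⟨hV, h⟩
    obtain ⟨f, hf⟩ := exists_Vf_eq_V (fun a => (hV a).2) h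
    exact ⟨isFunctionalAlexandroff_of_Vf_eq_V (fun a => (hV a).1) hf,
      uniformizable_of_partition (fun a => (hV a).1) h⟩
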